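/- Let T_m(x) = Σ_{σ ∈ Q_m} x^{fap(σ)} (a polynomial in x with integer coefficients, T_0(x) = 1). Then for every n ≥ 0, Σ_{k=0}^{n} C(n,k) · T_k(x) · T_{n−k}(−x) = δ_{0,n}, i.e. this sum equals 1 if n = 0 and equals the zero polynomial if n ≥ 1. -/

import Mathlib

open Finset MvPolynomial

/-- Stirling permutations of order `n`, encoded as functions `Fin (2*n) → Fin (n+1)`
in one-line notation (position `i` holds the letter `σ (i) ∈ {1,…,n}`), such that each
letter `1,…,n` occurs exactly twice and all entries between the two occurrences of a
letter are larger than that letter. -/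
def StirlingSet (n : ℕ) : Finset (Fin (2*n) → Fin (n+1)) :=
  Finset.univ.filter (fun σ =>
    (∀ v : Fin (n+1), (v : ℕ) ≠ 0 →
        (Finset.univ.filter (fun i => σ i = v)).card = 2) ∧
    (∀ i j k : Fin (2*n), i < j → j < k → σ i = σ k → σ i < σ j))

/-- The letter at position `i ∈ {1,…,2n}` of a Stirling permutation, with the
convention that positions outside this range (in particular position `0`) hold `0`. -/
def sval {n : ℕ} (σ : Fin (2*n) → Fin (n+1)) (i : ℕ) : ℕ :=
  if h : 1 ≤ i ∧ i ≤ 2*n then (σ ⟨i - 1, by omega⟩ : ℕ) else 0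

/-- The number of ascent-plateaus: indices `2 ≤ i ≤ 2n-1` with `σ_{i-1} < σ_i = σ_{i+1}`. -/
def apQ {n : ℕ} (σ : Fin (2*n) → Fin (n+1)) : ℕ :=
  ((Finset.Icc 2 (2*n - 1)).filter
    (fun i => sval σ (i-1) < sval σ i ∧ sval σ i = sval σ (i+1))).card

/-- The number of left ascent-plateaus: indices `1 ≤ i ≤ 2n-1` with
`σ_{i-1} < σ_i = σ_{i+1}`, where `σ_0 = 0`. -/
def lapQ {n : ℕ} (σ : Fin (2*n) → Fin (n+1)) : ℕ :=
  ((Finset.Icc 1 (2*n - 1)).filter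
    (fun i => sval σ (i-1) < sval σ i ∧ sval σ i = sval σ (i+1))).card

/-- The number of double ascents: indices `1 ≤ i ≤ 2n-1` with
`σ_{i-1} < σ_i < σ_{i+1}`, where `σ_0 = 0`. -/
def dascQ {n : ℕ} (σ : Fin (2*n) → Fin (n+1)) : ℕ :=
  ((Finset.Icc 1 (2*n - 1)).filter
    (fun i => sval σ (i-1) < sval σ i ∧ sval σ i < sval σ (i+1))).card

/-- The number of descent-plateaus: indices `2 ≤ i ≤ 2n-1` with
`σ_{i-1} > σ_i = σ_{i+1}`. -/
def dpQ {n : ℕ} (σ : Fin (2*n) → Fin (n+1)) : ℕ :=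
  ((Finset.Icc 2 (2*n - 1)).filter
    (fun i => sval σ i < sval σ (i-1) ∧ sval σ i = sval σ (i+1))).card

/-- The number of ascents: indices `1 ≤ i ≤ 2n-1` with `σ_i < σ_{i+1}` or `i = 1`. -/
def ascQ {n : ℕ} (σ : Fin (2*n) → Fin (n+1)) : ℕ :=
  ((Finset.Icc 1 (2*n - 1)).filter
    (fun i => sval σ i < sval σ (i+1) ∨ i = 1)).card

/-- The number of plateaus: indices `1 ≤ i ≤ 2n-1` with `σ_i = σ_{i+1}`. -/
def platQ {n : ℕ} (σ : Fin (2*n) → Fin (n+1)) : ℕ :=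
  ((Finset.Icc 1 (2*n - 1)).filter (fun i => sval σ i = sval σ (i+1))).card

/-- The flag ascent-plateau number: `2·ap(σ)+1` if `σ_1 = σ_2`, and `2·ap(σ)` otherwise. -/
def fapQ {n : ℕ} (σ : Fin (2*n) → Fin (n+1)) : ℕ :=
  if 1 ≤ n ∧ sval σ 1 = sval σ 2 then 2 * apQ σ + 1 else 2 * apQ σ

/-- The flag ascent-plateau polynomial `T_m(x) = Σ_{σ ∈ Q_m} x^{fap(σ)}`. -/
noncomputable def Tpoly (m : ℕ) : Polynomial ℤ :=
  ∑ σ ∈ StirlingSet m, Polynomial.X ^ fapQ σ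

/-- `σ` with two adjacent copies of the new maximal letter `n + 1` inserted after its first `p`
entries. -/
def insertMax {n : ℕ} (σ : Fin (2*n) → Fin (n+1)) (p : ℕ) :
    Fin (2*(n+1)) → Fin (n+1+1) := fun i =>
  if h : (i : ℕ) < p ∧ (i : ℕ) < 2*n then (σ ⟨i, h.2⟩).castSucc
  else if h' : (i : ℕ) < p + 2 then Fin.last (n+1)
  else (σ ⟨i - 2, by omega⟩).castSucc

/-- Positions of `σ` seen as positions of `insertMax σ p`. -/
def shiftPos {n : ℕ} (p : ℕ) (i : Fin (2*n)) : Fin (2*(n+1)) :=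
  ⟨if (i : ℕ) < p then i else i + 2, by split_ifs <;> omega⟩

lemma shiftPos_lt_shiftPos {n p : ℕ} {i j : Fin (2*n)} :
    shiftPos p i < shiftPos p j ↔ i < j := by
  simp only [shiftPos, Fin.lt_def]
  split_ifs <;> omega

lemma shiftPos_injective {n : ℕ} (p : ℕ) : Function.Injective (shiftPos (n := n) p) := by
  intro i j h
  simp only [shiftPos, Fin.ext_iff] at h ⊢
  split_ifs at h <;> omega

lemma exists_shiftPos_or {n p : ℕ} (hp : p ≤ 2*n) (i : Fin (2*(n+1))) :
    (∃ j, shiftPos p j = i) ∨ (i : ℕ) = p ∨ (i : ℕ) = p + 1 := by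
  by_cases h1 : (i : ℕ) < p
  · left
    refine ⟨⟨i, by omega⟩, ?_⟩
    simp [shiftPos, h1]
  by_cases h2 : (i : ℕ) < p + 2
  · right; omega
  · left
    refine ⟨⟨i - 2, by omega⟩, ?_⟩
    have h3 : ¬ (i : ℕ) - 2 < p := by omega
    simp only [shiftPos, h3, if_false, Fin.ext_iff]
    omega

lemma insertMax_shiftPos {n : ℕ} (σ : Fin (2*n) → Fin (n+1)) (p : ℕ) (i : Fin (2*n)) :
    insertMax σ p (shiftPos p i) = (σ i).castSucc := by
  by_cases h : (i : ℕ) < p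
  · simp [insertMax, shiftPos, h]
  · have h1 : ¬ (i : ℕ) + 2 < p := by omega
    simp [insertMax, shiftPos, h, h1]

lemma insertMax_eq_last {n p : ℕ} (σ : Fin (2*n) → Fin (n+1)) {i : Fin (2*(n+1))}
    (hi : (i : ℕ) = p ∨ (i : ℕ) = p + 1) : insertMax σ p i = Fin.last (n+1) := by
  have h1 : ¬ (i : ℕ) < p := by omega
  have h2 : (i : ℕ) < p + 2 := by omega
  simp [insertMax, h1, h2]

lemma insertMax_eq_last_iff {n p : ℕ} (hp : p ≤ 2*n) (σ : Fin (2*n) → Fin (n+1))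
    (i : Fin (2*(n+1))) :
    insertMax σ p i = Fin.last (n+1) ↔ (i : ℕ) = p ∨ (i : ℕ) = p + 1 := by
  refine ⟨fun h => ?_, insertMax_eq_last σ⟩
  rcases exists_shiftPos_or hp i with ⟨j, rfl⟩ | h'
  · rw [insertMax_shiftPos] at h
    exact absurd h (Fin.castSucc_lt_last _).ne
  · exact h'

lemma card_filter_eq_last {n p : ℕ} (hp : p ≤ 2*n) :
    (Finset.univ.filter (fun i : Fin (2*(n+1)) => (i : ℕ) = p ∨ (i : ℕ) = p + 1)).card = 2 := by
  have : Finset.univ.filter (fun i : Fin (2*(n+1)) => (i : ℕ) = p ∨ (i : ℕ) = p + 1) =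
      {⟨p, by omega⟩, ⟨p + 1, by omega⟩} := by
    ext i
    simp [Fin.ext_iff]
  rw [this, Finset.card_pair]
  simp [Fin.ext_iff]

lemma card_filter_insertMax {n p : ℕ} (hp : p ≤ 2*n) (σ : Fin (2*n) → Fin (n+1))
    (v : Fin (n+1)) :
    (Finset.univ.filter (fun i => insertMax σ p i = v.castSucc)).card =
      (Finset.univ.filter (fun i => σ i = v)).card := by
  rw [← Finset.card_map ⟨shiftPos p, shiftPos_injective (n := n) p⟩]
  congr 1
  ext i
  simp only [Finset.mem_filter, Finset.mem_univ, true_and, Finset.mem_map,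
    Function.Embedding.coeFn_mk]
  constructor
  · intro h
    rcases exists_shiftPos_or hp i with ⟨j, rfl⟩ | h'
    · rw [insertMax_shiftPos] at h
      exact ⟨j, Fin.castSucc_injective _ h, rfl⟩
    · rw [insertMax_eq_last σ h'] at h
      exact absurd h.symm (Fin.castSucc_lt_last _).ne
  · rintro ⟨j, rfl, rfl⟩
    exact insertMax_shiftPos σ p j

lemma insertMax_mem_stirlingSet_iff {n p : ℕ} (hp : p ≤ 2*n) (σ : Fin (2*n) → Fin (n+1)) :
    insertMax σ p ∈ StirlingSet (n+1) ↔ σ ∈ StirlingSet n := by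
  simp only [StirlingSet, Finset.mem_filter, Finset.mem_univ, true_and]
  refine and_congr ⟨fun h v hv => ?_, fun h v hv => ?_⟩ ⟨fun h i j k hij hjk hik => ?_,
    fun h i j k hij hjk hik => ?_⟩
  · rw [← card_filter_insertMax hp]
    exact h v.castSucc hv
  · induction v using Fin.lastCases with
    | last => simp only [insertMax_eq_last_iff hp, card_filter_eq_last hp]
    | cast v => rw [card_filter_insertMax hp]; exact h v hv
  · have := h (shiftPos p i) (shiftPos p j) (shiftPos p k) (shiftPos_lt_shiftPos.2 hij)
      (shiftPos_lt_shiftPos.2 hjk) (by simp only [insertMax_shiftPos, hik])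
    simpa only [insertMax_shiftPos, Fin.castSucc_lt_castSucc_iff] using this
  · rcases exists_shiftPos_or hp i with ⟨i, rfl⟩ | hi
    · rcases exists_shiftPos_or hp k with ⟨k, rfl⟩ | hk
      · rcases exists_shiftPos_or hp j with ⟨j, rfl⟩ | hj
        · simp only [insertMax_shiftPos, shiftPos_lt_shiftPos, Fin.castSucc_lt_castSucc_iff]
            at hij hjk hik ⊢
          exact h i j k hij hjk (Fin.castSucc_injective _ hik)
        · rw [insertMax_shiftPos, insertMax_eq_last σ hj]
          exact Fin.castSucc_lt_last _
      · rw [insertMax_shiftPos, insertMax_eq_last σ hk] at hik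
        exact absurd hik (Fin.castSucc_lt_last _).ne
    · have hk := (insertMax_eq_last_iff hp σ k).1 (hik ▸ insertMax_eq_last σ hi)
      rw [Fin.lt_def] at hij hjk
      omega

lemma insertMax_injOn (n : ℕ) :
    Set.InjOn (fun q : (Fin (2*n) → Fin (n+1)) × ℕ => insertMax q.1 q.2)
      {q | q.2 ≤ 2*n} := by
  rintro ⟨σ, p⟩ hp ⟨τ, q⟩ hq h
  simp only [Set.mem_ofPred_eq] at hp hq h
  have key : ∀ i : Fin (2*(n+1)),
      ((i : ℕ) = p ∨ (i : ℕ) = p + 1) ↔ ((i : ℕ) = q ∨ (i : ℕ) = q + 1) := fun i => by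
    rw [← insertMax_eq_last_iff hp σ, h, insertMax_eq_last_iff hq τ]
  have h1 := (key ⟨p, by omega⟩).1 (Or.inl rfl)
  have h2 := (key ⟨q, by omega⟩).2 (Or.inl rfl)
  simp only at h1 h2
  obtain rfl : p = q := by omega
  refine Prod.ext (funext fun i => Fin.castSucc_injective _ ?_) rfl
  rw [← insertMax_shiftPos σ p, h, insertMax_shiftPos]

lemma exists_insertMax_eq {n : ℕ} {τ : Fin (2*(n+1)) → Fin (n+1+1)}
    (hτ : τ ∈ StirlingSet (n+1)) : ∃ σ p, p ≤ 2*n ∧ insertMax σ p = τ := by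
  simp only [StirlingSet, Finset.mem_filter, Finset.mem_univ, true_and] at hτ
  obtain ⟨hcard, hord⟩ := hτ
  obtain ⟨a, b, hab, hfil⟩ : ∃ a b : Fin (2*(n+1)), a < b ∧
      Finset.univ.filter (fun i => τ i = Fin.last (n+1)) = {a, b} := by
    obtain ⟨a, b, hab, h⟩ := Finset.card_eq_two.1 (hcard (Fin.last (n+1)) (by simp))
    rcases lt_or_gt_of_ne hab with hlt | hlt
    · exact ⟨a, b, hlt, h⟩
    · exact ⟨b, a, hlt, by rw [h, Finset.pair_comm]⟩
  have hmem : ∀ i, τ i = Fin.last (n+1) ↔ i = a ∨ i = b := fun i => by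
    simpa using Finset.ext_iff.1 hfil i
  have hb : (b : ℕ) = a + 1 := by
    by_contra hne
    have hlt : (a : ℕ) + 1 < b := by rw [Fin.lt_def] at hab; omega
    have := hord a ⟨a + 1, by omega⟩ b (by simp [Fin.lt_def]) (by simpa [Fin.lt_def] using hlt)
      (by rw [(hmem a).2 (Or.inl rfl), (hmem b).2 (Or.inr rfl)])
    rw [(hmem a).2 (Or.inl rfl)] at this
    exact absurd this (Fin.le_last _).not_gt
  have ha : (a : ℕ) ≤ 2*n := by omega
  have hlast : ∀ i : Fin (2*n), τ (shiftPos a i) ≠ Fin.last (n+1) := fun i h => by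
    rcases (hmem _).1 h with h | h <;> simp only [shiftPos, Fin.ext_iff] at h <;>
      split_ifs at h <;> omega
  refine ⟨fun i => (τ (shiftPos a i)).castPred (hlast i), a, ha, funext fun i => ?_⟩
  rcases exists_shiftPos_or ha i with ⟨j, rfl⟩ | hi
  · rw [insertMax_shiftPos, Fin.castSucc_castPred]
  · rw [insertMax_eq_last _ hi, eq_comm, hmem, Fin.ext_iff, Fin.ext_iff]
    omega

lemma sum_stirlingSet_succ {M : Type*} [AddCommMonoid M] (n : ℕ)
    (f : (Fin (2*(n+1)) → Fin (n+1+1)) → M) :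
    ∑ τ ∈ StirlingSet (n+1), f τ =
      ∑ σ ∈ StirlingSet n, ∑ p ∈ Finset.range (2*n+1), f (insertMax σ p) := by
  rw [← Finset.sum_product', eq_comm]
  refine Finset.sum_nbij (fun q => insertMax q.1 q.2) ?_ ?_ ?_ (fun _ _ => rfl)
  · rintro ⟨σ, p⟩ h
    rw [Finset.mem_product, Finset.mem_range] at h
    exact (insertMax_mem_stirlingSet_iff (Nat.lt_succ_iff.1 h.2) σ).2 h.1
  · refine (insertMax_injOn n).mono fun q hq => ?_
    rw [Finset.mem_coe, Finset.mem_product, Finset.mem_range] at hq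
    exact Nat.lt_succ_iff.1 hq.2
  · intro τ hτ
    obtain ⟨σ, p, hp, rfl⟩ := exists_insertMax_eq hτ
    refine ⟨(σ, p), ?_, rfl⟩
    rw [Finset.mem_coe, Finset.mem_product, Finset.mem_range]
    exact ⟨(insertMax_mem_stirlingSet_iff hp σ).1 hτ, Nat.lt_succ_iff.2 hp⟩

lemma ne_zero_of_mem_stirlingSet {n : ℕ} {σ : Fin (2*n) → Fin (n+1)} (hσ : σ ∈ StirlingSet n)
    (i : Fin (2*n)) : σ i ≠ 0 := by
  simp only [StirlingSet, Finset.mem_filter, Finset.mem_univ, true_and] at hσ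
  have h := Finset.card_eq_sum_card_fiberwise (f := σ) (s := Finset.univ) (t := Finset.univ)
    (fun _ _ => by simp)
  rw [Fin.sum_univ_succ, Finset.sum_congr rfl fun v _ => hσ.1 (Fin.succ v) (by simp)] at h
  simp only [Finset.card_univ, Fintype.card_fin, Finset.sum_const, smul_eq_mul] at h
  have h0 : (Finset.univ.filter (fun i => σ i = 0)).card = 0 := by omega
  rw [Finset.card_eq_zero, Finset.filter_eq_empty_iff] at h0
  exact h0 (Finset.mem_univ i)

lemma sval_le {n : ℕ} (σ : Fin (2*n) → Fin (n+1)) (i : ℕ) : sval σ i ≤ n := by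
  unfold sval
  split_ifs
  · exact Fin.is_le _
  · exact Nat.zero_le n

lemma sval_pos {n : ℕ} {σ : Fin (2*n) → Fin (n+1)} (hσ : σ ∈ StirlingSet n) {i : ℕ}
    (hi : 1 ≤ i ∧ i ≤ 2*n) : 0 < sval σ i := by
  rw [sval, dif_pos hi]
  exact Nat.pos_of_ne_zero fun h => ne_zero_of_mem_stirlingSet hσ _ (Fin.ext h)

lemma sval_eq_zero {n : ℕ} (σ : Fin (2*n) → Fin (n+1)) {i : ℕ} (hi : i = 0 ∨ 2*n < i) :
    sval σ i = 0 :=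
  dif_neg (by omega)

lemma sval_insertMax {n p : ℕ} (hp : p ≤ 2*n) (σ : Fin (2*n) → Fin (n+1)) (i : ℕ) :
    sval (insertMax σ p) i =
      if i ≤ p then sval σ i else if i ≤ p + 2 then n + 1 else sval σ (i - 2) := by
  by_cases hi : 1 ≤ i ∧ i ≤ 2*(n+1)
  · rw [sval, dif_pos hi]
    split_ifs with h1 h2
    · have h3 : i - 1 < p ∧ i - 1 < 2*n := by omega
      have h4 : 1 ≤ i ∧ i ≤ 2*n := by omega
      simp [insertMax, sval, h3, h4]
    · rw [insertMax_eq_last σ (by simp only; omega)]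
      simp
    · have h3 : ¬ (i - 1 < p ∧ i - 1 < 2*n) := by omega
      have h4 : 1 ≤ i - 2 ∧ i - 2 ≤ 2*n := by omega
      have h5 : ¬ i - 1 < p + 2 := by omega
      simp only [insertMax, sval, h3, h4, h5, dif_pos, dif_neg, not_false_eq_true, and_self,
        Fin.val_castSucc]
      congr 3
  · rw [sval_eq_zero _ (by omega)]
    split_ifs
    · exact (sval_eq_zero σ (by omega)).symm
    · omega
    · exact (sval_eq_zero σ (by omega)).symm

/-- Position `i` of the word `s` is a left ascent-plateau. -/
def IsLap (s : ℕ → ℕ) (i : ℕ) : Prop := 1 ≤ i ∧ s (i - 1) < s i ∧ s i = s (i + 1)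

instance (s : ℕ → ℕ) : DecidablePred (IsLap s) := fun _ =>
  inferInstanceAs (Decidable (_ ∧ _))

/-- The contribution of position `i` to the flag ascent-plateau number of `s`. -/
def lapWeight (s : ℕ → ℕ) (i : ℕ) : ℕ :=
  if IsLap s i then (if i = 1 then 1 else 2) else 0

lemma lapWeight_congr {s t : ℕ → ℕ} {i j : ℕ} (h1 : 1 ≤ i ↔ 1 ≤ j) (h2 : i = 1 ↔ j = 1)
    (e1 : s (i - 1) = t (j - 1)) (e2 : s i = t j) (e3 : s (i + 1) = t (j + 1)) :
    lapWeight s i = lapWeight t j := by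
  have h : IsLap s i ↔ IsLap t j := by simp only [IsLap, h1, e1, e2, e3]
  simp only [lapWeight, h, h2]

lemma isLap_sval_iff {n : ℕ} {σ : Fin (2*n) → Fin (n+1)} {i : ℕ} :
    IsLap (sval σ) i ↔ (1 ≤ i ∧ i ≤ 2*n - 1) ∧ sval σ (i-1) < sval σ i ∧
      sval σ i = sval σ (i+1) := by
  refine ⟨fun h => ⟨⟨h.1, ?_⟩, h.2⟩, fun h => ⟨h.1.1, h.2⟩⟩
  by_contra hi
  have h1 := sval_eq_zero σ (i := i + 1) (by omega)
  have := h.2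
  omega

lemma fapQ_eq_sum {n : ℕ} {σ : Fin (2*n) → Fin (n+1)} (hσ : σ ∈ StirlingSet n) :
    fapQ σ = ∑ i ∈ Finset.range (2*n+2), lapWeight (sval σ) i := by
  have h0 : sval σ 0 = 0 := sval_eq_zero σ (Or.inl rfl)
  have hone : (1 ≤ n ∧ sval σ 1 = sval σ 2) ↔ IsLap (sval σ) 1 := by
    rw [isLap_sval_iff]
    constructor
    · rintro ⟨h1, h2⟩
      have := sval_pos hσ (i := 1) (by omega)
      exact ⟨by omega, by simpa [h0] using this, h2⟩
    · rintro ⟨h1, -, h2⟩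
      exact ⟨by omega, h2⟩
  have hap : 2 * apQ σ =
      ∑ i ∈ Finset.range (2*n), lapWeight (sval σ) (i + 1 + 1) := by
    have : (Finset.Icc 2 (2*n - 1)).filter
          (fun i => sval σ (i-1) < sval σ i ∧ sval σ i = sval σ (i+1)) =
        ((Finset.range (2*n)).filter (fun i => IsLap (sval σ) (i + 1 + 1))).map
          (addRightEmbedding 2) := by
      ext i
      simp only [Finset.mem_filter, Finset.mem_Icc, Finset.mem_map, Finset.mem_range,
        addRightEmbedding_apply, isLap_sval_iff]
      constructor
      · rintro ⟨h1, h2⟩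
        obtain ⟨j, rfl⟩ := Nat.exists_eq_add_of_le' h1.1
        exact ⟨j, ⟨by omega, by omega, h2⟩, rfl⟩
      · rintro ⟨j, ⟨-, h1, h2⟩, rfl⟩
        exact ⟨by omega, h2⟩
    rw [apQ, this, Finset.card_map, Finset.card_filter, Finset.mul_sum]
    refine Finset.sum_congr rfl fun i _ => ?_
    simp [lapWeight]
  rw [Finset.sum_range_succ', Finset.sum_range_succ', ← hap, fapQ]
  simp only [hone, lapWeight, IsLap]
  split_ifs <;> simp_all

lemma fapQ_insertMax {n p : ℕ} (hp : p ≤ 2*n) {σ : Fin (2*n) → Fin (n+1)}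
    (hσ : σ ∈ StirlingSet n) :
    fapQ (insertMax σ p) + lapWeight (sval σ) p + lapWeight (sval σ) (p+1) =
      fapQ σ + if p = 0 then 1 else 2 := by
  have hle := sval_le σ
  have hs := sval_insertMax hp σ
  rw [fapQ_eq_sum hσ, fapQ_eq_sum ((insertMax_mem_stirlingSet_iff hp σ).2 hσ)]
  set t := sval (insertMax σ p)
  set s := sval σ
  obtain ⟨r, hr⟩ := Nat.exists_eq_add_of_le hp
  rw [show 2*(n+1)+2 = p + (r + 1 + 1 + 1 + 1) by omega, show 2*n+2 = p + (r+1+1) by omega,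
    Finset.sum_range_add _ p (r+1+1+1+1), Finset.sum_range_add _ p (r+1+1)]
  simp only [Finset.sum_range_succ']
  have hlow : ∀ i ∈ Finset.range p, lapWeight t i = lapWeight s i := by
    intro i hi
    rw [Finset.mem_range] at hi
    refine lapWeight_congr Iff.rfl Iff.rfl ?_ ?_ ?_ <;> rw [hs, if_pos (by omega)]
  have hhigh : ∀ i ∈ Finset.range r,
      lapWeight t (p + (i+1+1+1+1)) = lapWeight s (p + (i+1+1)) := by
    intro i _
    refine lapWeight_congr (by omega) (by omega) ?_ ?_ ?_ <;>
      rw [hs, if_neg (by omega), if_neg (by omega)] <;> congr 1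
  rw [Finset.sum_congr rfl hlow, Finset.sum_congr rfl hhigh]
  have t0 : t p = s p := by rw [hs, if_pos le_rfl]
  have t1 : t (p+1) = n+1 := by rw [hs, if_neg (by omega), if_pos (by omega)]
  have t2 : t (p+2) = n+1 := by rw [hs, if_neg (by omega), if_pos (by omega)]
  have t3 : t (p+3) = s (p+1) := by rw [hs, if_neg (by omega), if_neg (by omega)]; congr 1
  have w0 : lapWeight t p = 0 := if_neg fun h => by
    have := h.2.2; have := hle p; omega
  have w1 : lapWeight t (p+1) = if p = 0 then 1 else 2 := by
    have : IsLap t (p+1) := by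
      refine ⟨by omega, ?_, by rw [t1, t2]⟩
      rw [Nat.add_sub_cancel, t0, t1]
      exact Nat.lt_succ_of_le (hle p)
    rw [lapWeight, if_pos this]
    simp
  have w2 : lapWeight t (p+2) = 0 := if_neg fun h => by
    have := h.2.1; rw [show p + 2 - 1 = p + 1 by omega] at this; omega
  have w3 : lapWeight t (p+3) = 0 := if_neg fun h => by
    have := h.2.1; rw [show p + 3 - 1 = p + 2 by omega] at this; have := hle (p+1); omega
  simp only [zero_add, add_zero, Nat.reduceAdd, w0, w1, w2, w3]
  ring

lemma not_isLap_succ {s : ℕ → ℕ} {i : ℕ} (h : IsLap s i) : ¬ IsLap s (i+1) := fun h' => by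
  have h1 := h.2.2
  have h2 := h'.2.1
  rw [Nat.add_sub_cancel] at h2
  omega

/-- The number of left ascent-plateaus of `s` at position `i`, as a constant polynomial. -/
noncomputable def lapIndicator (s : ℕ → ℕ) (i : ℕ) : Polynomial ℤ := if IsLap s i then 1 else 0

lemma X_pow_fapQ_insertMax_zero {n : ℕ} {σ : Fin (2*n) → Fin (n+1)} (hσ : σ ∈ StirlingSet n) :
    (Polynomial.X : Polynomial ℤ) ^ fapQ (insertMax σ 0) =
      Polynomial.X ^ (fapQ σ + 1) +
        lapIndicator (sval σ) 1 * (Polynomial.X ^ fapQ σ - Polynomial.X ^ (fapQ σ + 1)) := by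
  have h := fapQ_insertMax (Nat.zero_le _) hσ
  have h0 : ¬ IsLap (sval σ) 0 := fun h => absurd h.1 (by omega)
  by_cases h1 : IsLap (sval σ) 1 <;> simp [lapWeight, lapIndicator, h0, h1] at h ⊢ <;> rw [h]

lemma X_pow_fapQ_insertMax_one {n : ℕ} (hn : 1 ≤ n) {σ : Fin (2*n) → Fin (n+1)}
    (hσ : σ ∈ StirlingSet n) :
    (Polynomial.X : Polynomial ℤ) ^ fapQ (insertMax σ 1) =
      Polynomial.X ^ (fapQ σ + 2) +
        lapIndicator (sval σ) 1 * (Polynomial.X ^ (fapQ σ + 1) - Polynomial.X ^ (fapQ σ + 2)) +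
        lapIndicator (sval σ) 2 * (Polynomial.X ^ fapQ σ - Polynomial.X ^ (fapQ σ + 2)) := by
  have h := fapQ_insertMax (p := 1) (by omega) hσ
  by_cases h1 : IsLap (sval σ) 1
  · have h2 := not_isLap_succ h1
    simp [lapWeight, lapIndicator, h1, h2] at h ⊢
    rw [show fapQ (insertMax σ 1) = fapQ σ + 1 by omega]
  · by_cases h2 : IsLap (sval σ) 2 <;> simp [lapWeight, lapIndicator, h1, h2] at h ⊢ <;> rw [h]

lemma X_pow_fapQ_insertMax_add_two {n q : ℕ} (hq : q + 2 ≤ 2*n) {σ : Fin (2*n) → Fin (n+1)}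
    (hσ : σ ∈ StirlingSet n) :
    (Polynomial.X : Polynomial ℤ) ^ fapQ (insertMax σ (q+2)) =
      Polynomial.X ^ (fapQ σ + 2) +
        (lapIndicator (sval σ) (q+2) + lapIndicator (sval σ) (q+3)) *
          (Polynomial.X ^ fapQ σ - Polynomial.X ^ (fapQ σ + 2)) := by
  have h := fapQ_insertMax hq hσ
  by_cases h1 : IsLap (sval σ) (q+2)
  · have h2 := not_isLap_succ h1
    simp [lapWeight, lapIndicator, h1, h2] at h ⊢
    rw [h]
  · by_cases h2 : IsLap (sval σ) (q+3) <;> simp [lapWeight, lapIndicator, h1, h2] at h ⊢ <;> rw [h]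

lemma fapQ_cast_eq_sum {m : ℕ} {σ : Fin (2*(m+1)) → Fin (m+1+1)}
    (hσ : σ ∈ StirlingSet (m+1)) :
    (fapQ σ : Polynomial ℤ) = lapIndicator (sval σ) 1 +
      2 * ∑ q ∈ Finset.range (2*m+1), lapIndicator (sval σ) (q+2) := by
  have h0 : ¬ IsLap (sval σ) 0 := fun h => absurd h.1 (by omega)
  have h1 : ¬ IsLap (sval σ) (2*m+1+1+1) := fun h => by
    have := (isLap_sval_iff.1 h).1; omega
  rw [fapQ_eq_sum hσ, show 2*(m+1)+2 = 2*m+1+1+1+1 by ring, Finset.sum_range_succ,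
    Finset.sum_range_succ', Finset.sum_range_succ', Finset.mul_sum]
  simp [lapWeight, lapIndicator, h0, h1, add_assoc]
  simp [add_comm]

lemma sum_X_pow_fapQ_insertMax {n : ℕ} {σ : Fin (2*n) → Fin (n+1)} (hσ : σ ∈ StirlingSet n) :
    ∑ p ∈ Finset.range (2*n+1), (Polynomial.X : Polynomial ℤ) ^ fapQ (insertMax σ p) =
      Polynomial.X ^ (fapQ σ + 1) + 2 * (n : Polynomial ℤ) * Polynomial.X ^ (fapQ σ + 2) +
        (fapQ σ : Polynomial ℤ) * (Polynomial.X ^ fapQ σ - Polynomial.X ^ (fapQ σ + 2)) := by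
  obtain _ | m := n
  · have h1 : ¬ IsLap (sval σ) 1 := fun h => by have := (isLap_sval_iff.1 h).1; omega
    have hf : fapQ σ = 0 := by simp [fapQ, apQ]
    simp [X_pow_fapQ_insertMax_zero hσ, lapIndicator, h1, hf]
  have hsum : ∑ q ∈ Finset.range (2*m+1), lapIndicator (sval σ) (q+3) +
      lapIndicator (sval σ) 2 = ∑ q ∈ Finset.range (2*m+1), lapIndicator (sval σ) (q+2) := by
    have h1 : ¬ IsLap (sval σ) (2*m+1+2) := fun h => by
      have := (isLap_sval_iff.1 h).1; omega
    have h2 := Finset.sum_range_succ' (fun q => lapIndicator (sval σ) (q+2)) (2*m+1)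
    rw [Finset.sum_range_succ, lapIndicator.eq_def _ (2*m+1+2), if_neg h1, add_zero] at h2
    exact h2.symm
  rw [show 2*(m+1)+1 = 2*m+1+1+1 by ring, Finset.sum_range_succ', Finset.sum_range_succ',
    Finset.sum_congr rfl fun q hq => X_pow_fapQ_insertMax_add_two
      (by rw [Finset.mem_range] at hq; omega) hσ,
    X_pow_fapQ_insertMax_one (by omega) hσ, X_pow_fapQ_insertMax_zero hσ, fapQ_cast_eq_sum hσ,
    Finset.sum_add_distrib, ← Finset.sum_mul, Finset.sum_add_distrib, ← hsum]
  simp only [Finset.sum_const, Finset.card_range, nsmul_eq_mul]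
  push_cast
  ring

lemma Tpoly_zero : Tpoly 0 = 1 := by
  have h : StirlingSet 0 = Finset.univ := Finset.filter_true_of_mem fun σ _ =>
    ⟨fun v hv => absurd v.isLt (by omega), fun i => i.elim0⟩
  simp [Tpoly, h, fapQ, apQ]

lemma Tpoly_succ (n : ℕ) :
    Tpoly (n+1) = (Polynomial.X + 2 * (n : Polynomial ℤ) * Polynomial.X ^ 2) * Tpoly n +
      Polynomial.X * (1 - Polynomial.X ^ 2) * Polynomial.derivative (Tpoly n) := by
  rw [Tpoly, sum_stirlingSet_succ, Finset.sum_congr rfl fun σ hσ => sum_X_pow_fapQ_insertMax hσ,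
    Tpoly, Polynomial.derivative_sum, Finset.mul_sum, Finset.mul_sum, ← Finset.sum_add_distrib]
  refine Finset.sum_congr rfl fun σ _ => ?_
  rw [Polynomial.derivative_X_pow]
  rcases fapQ σ with _ | f
  · simp
  · simp; ring

lemma Tpoly_comp_neg_X_succ (n : ℕ) :
    (Tpoly (n+1)).comp (-Polynomial.X) =
      (-Polynomial.X + 2 * (n : Polynomial ℤ) * Polynomial.X ^ 2) * (Tpoly n).comp (-Polynomial.X) +
      Polynomial.X * (1 - Polynomial.X ^ 2) *
        Polynomial.derivative ((Tpoly n).comp (-Polynomial.X)) := by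
  rw [Tpoly_succ, Polynomial.derivative_comp]
  simp

/-- The `n`-th coefficient of the product of the exponential generating functions of
`Tpoly` at `x` and at `-x`. -/
noncomputable def TpolyConv (n : ℕ) : Polynomial ℤ :=
  ∑ k ∈ Finset.range (n + 1),
    (n.choose k : Polynomial ℤ) * Tpoly k * (Tpoly (n - k)).comp (-Polynomial.X)

lemma TpolyConv_succ (n : ℕ) :
    TpolyConv (n+1) = 2 * (n : Polynomial ℤ) * Polynomial.X ^ 2 * TpolyConv n +
      Polynomial.X * (1 - Polynomial.X ^ 2) * Polynomial.derivative (TpolyConv n) := by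
  have h := Finset.sum_choose_succ_mul
    (fun i j => Tpoly i * (Tpoly j).comp (-Polynomial.X)) n
  simp only [← mul_assoc] at h
  rw [TpolyConv, h, TpolyConv, Polynomial.derivative_sum, Finset.mul_sum, Finset.mul_sum,
    ← Finset.sum_add_distrib, ← Finset.sum_add_distrib]
  refine Finset.sum_congr rfl fun k hk => ?_
  rw [Finset.mem_range] at hk
  have hn : ((n - k : ℕ) : Polynomial ℤ) = n - k := Nat.cast_sub (by omega)
  rw [show n + 1 - k = n - k + 1 by omega, Tpoly_comp_neg_X_succ, Tpoly_succ, hn,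
    Polynomial.derivative_mul, Polynomial.derivative_mul, Polynomial.derivative_natCast]
  ring

theorem statement_9 (n : ℕ) :
    (∑ k ∈ Finset.range (n + 1),
        (n.choose k : Polynomial ℤ) * Tpoly k * ((Tpoly (n - k)).comp (-Polynomial.X))) =
      if n = 0 then 1 else 0 := by
  change TpolyConv n = _
  induction n with
  | zero => simp [TpolyConv, Tpoly_zero]
  | succ n ih =>
    rw [TpolyConv_succ, ih]
    rcases n with _ | n <;> simp
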